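/- Let f : ℝ^n → ℝ be analytic on an open neighborhood of the origin with f(0) = 0, let ω be the initial form of f of degree d, and let a < 0 be a regular value of the restriction of ω to the unit sphere S^{n-1}. Then there exists r₀ > 0 such that for every r ∈ (0, r₀), the sets {x ∈ S^{n-1} : f(r·x) ≤ a·r^d} and {x ∈ S^{n-1} : ω(x) ≤ a} are homeomorphic. -/

import Mathlib

open Metric Set Asymptotics

/-!
For small `r` the function `x ↦ r⁻ᵈ f (r x)` differs on the unit sphere from `ω` by a function `u`
which is small together with its derivative. Since `a` is a regular value, points of the sphere
close to `{ω = a}` can be moved along curves `t ↦ Q (x, t)` in the sphere along which `ω` increases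
with positive speed. If `χ` is a cutoff equal to `1` near `{ω = a}`, then
`ω (Q (x, σ x)) = ω x + χ x * u x` has a solution `σ` which is small in the Lipschitz norm, so that
`x ↦ Q (x, σ x)` is a Lipschitz-small perturbation of the identity of the sphere. Its radial
extension is then a homeomorphism of the whole space by the inverse function theorem for Lipschitz
perturbations of the identity, and it carries `{ω + u ≤ a}` onto `{ω ≤ a}`.
-/

open scoped Topology

section OrderOfVanishing

variable {𝕜 E F : Type*} [NontriviallyNormedField 𝕜] [NormedAddCommGroup E] [NormedSpace 𝕜 E]
  [NormedAddCommGroup F] [NormedSpace 𝕜 F] {g : E → F} {d : ℕ}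

theorem isBigO_norm_pow_of_le {m n : ℕ} (h : m ≤ n) :
    (fun y : E => ‖y‖ ^ n) =O[𝓝 0] fun y => ‖y‖ ^ m :=
  h.eq_or_lt.elim (fun h => h ▸ isBigO_refl _ _) fun h => (isLittleO_norm_pow_norm_pow h).isBigO

theorem powerSeries_apply_diag_eq_zero {p : FormalMultilinearSeries 𝕜 E F}
    (hp : HasFPowerSeriesAt g p 0) (hg : g =O[𝓝 0] fun y => ‖y‖ ^ (d + 1)) {k : ℕ} (hk : k ≤ d)
    (y : E) : (p k fun _ => y) = 0 := by
  induction k using Nat.strong_induction_on generalizing y with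
  | _ k ih =>
    refine IsBigO.continuousMultilinearMap_apply_eq_zero ?_ y
    have taylor := hp.isBigO_sub_partialSum_pow (k + 1)
    have partialSum_eq (z : E) : p.partialSum (k + 1) z = p k fun _ => z := by
      rw [FormalMultilinearSeries.partialSum, Finset.sum_range_succ, Finset.sum_eq_zero, zero_add]
      intro i hi
      have hik := Finset.mem_range.1 hi
      exact ih i hik (hik.le.trans hk) z
    simp only [zero_add, partialSum_eq] at taylor
    simpa only [sub_sub_cancel] using
      (hg.trans (isBigO_norm_pow_of_le (Nat.succ_le_succ hk))).sub taylor

/-- The power series `p` with its terms of degree at most `d` removed. -/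
def truncateBelow (p : FormalMultilinearSeries 𝕜 E F) (d : ℕ) : FormalMultilinearSeries 𝕜 E F :=
  fun k => if k ≤ d then 0 else p k

theorem hasFPowerSeriesAt_truncateBelow {p : FormalMultilinearSeries 𝕜 E F}
    (hp : HasFPowerSeriesAt g p 0) (hg : g =O[𝓝 0] fun y => ‖y‖ ^ (d + 1)) :
    HasFPowerSeriesAt g (truncateBelow p d) 0 := by
  obtain ⟨r, hr⟩ := hp
  refine ⟨r, hr.r_le.trans (FormalMultilinearSeries.radius_le_of_le fun k => ?_), hr.r_pos,
    fun {y} hy => (hr.hasSum hy).congr_fun fun k => ?_⟩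
  · by_cases hk : k ≤ d <;> simp [truncateBelow, hk]
  · by_cases hk : k ≤ d
    · simp [truncateBelow, hk, powerSeries_apply_diag_eq_zero hr.hasFPowerSeriesAt hg hk y]
    · simp [truncateBelow, hk]

theorem derivSeries_truncateBelow {p : FormalMultilinearSeries 𝕜 E F} {k : ℕ} (hk : k < d) :
    (truncateBelow p d).derivSeries k = 0 := by
  have coeff_eq_zero : truncateBelow p d (1 + k) = 0 := if_pos (by lia)
  have changeOrigin_eq_zero : (truncateBelow p d).changeOriginSeries 1 k = 0 := by
    refine Finset.sum_eq_zero fun s _ => ?_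
    simp only [FormalMultilinearSeries.changeOriginSeriesTerm, coeff_eq_zero]
    exact LinearIsometryEquiv.map_zero _
  ext y v
  simp [FormalMultilinearSeries.derivSeries, changeOrigin_eq_zero]

theorem isBigO_fderiv_of_isBigO_norm_pow [CompleteSpace F] (hg : AnalyticAt 𝕜 g 0)
    (hgO : g =O[𝓝 0] fun y => ‖y‖ ^ (d + 1)) : fderiv 𝕜 g =O[𝓝 0] fun y => ‖y‖ ^ d := by
  obtain ⟨p, hp⟩ := hg
  obtain ⟨r, hr⟩ := hasFPowerSeriesAt_truncateBelow hp hgO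
  have taylor := hr.fderiv.hasFPowerSeriesAt.isBigO_sub_partialSum_pow d
  have partialSum_eq (y : E) : (truncateBelow p d).derivSeries.partialSum d y = 0 :=
    Finset.sum_eq_zero fun k hk => by simp [derivSeries_truncateBelow (Finset.mem_range.1 hk)]
  simpa only [zero_add, partialSum_eq, sub_zero] using taylor

end OrderOfVanishing

/-- `u` is small in the Lipschitz norm on `s`: its sup norm and its Lipschitz constant there are
both at most `ε`. -/
structure IsLipschitzSmallOn {E F : Type*} [SeminormedAddCommGroup E] [SeminormedAddCommGroup F]
    (ε : ℝ) (u : E → F) (s : Set E) : Prop where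
  norm_le : ∀ x ∈ s, ‖u x‖ ≤ ε
  norm_sub_le : ∀ x ∈ s, ∀ y ∈ s, ‖u x - u y‖ ≤ ε * ‖x - y‖

theorem IsLipschitzSmallOn.mono {E F : Type*} [SeminormedAddCommGroup E] [SeminormedAddCommGroup F]
    {u : E → F} {s t : Set E} {ε δ : ℝ} (hu : IsLipschitzSmallOn ε u t) (hst : s ⊆ t)
    (hεδ : ε ≤ δ) : IsLipschitzSmallOn δ u s where
  norm_le x hx := (hu.norm_le x (hst hx)).trans hεδ
  norm_sub_le x hx y hy := (hu.norm_sub_le x (hst hx) y (hst hy)).trans (by gcongr)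

theorem eventually_isLipschitzSmallOn_rescale {E F : Type*} [NormedAddCommGroup E] [NormedSpace ℝ E]
    [NormedAddCommGroup F] [NormedSpace ℝ F] [CompleteSpace F] {g : E → F} {d : ℕ}
    (hg : AnalyticAt ℝ g 0) (hgO : g =O[𝓝 0] fun y => ‖y‖ ^ (d + 1)) {ε : ℝ} (hε : 0 < ε) :
    ∀ᶠ r in 𝓝[>] (0 : ℝ),
      IsLipschitzSmallOn ε (fun x => (r ^ d)⁻¹ • g (r • x)) (closedBall 0 1) := by
  obtain ⟨C, hC, hgC⟩ := hgO.exists_pos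
  obtain ⟨D, hD, hgD⟩ := (isBigO_fderiv_of_isBigO_norm_pow hg hgO).exists_pos
  obtain ⟨ρ, hρ, hball⟩ := eventually_nhds_iff_ball.1
    (hgC.bound.and (hgD.bound.and hg.eventually_analyticAt))
  filter_upwards [Ioo_mem_nhdsGT hρ, Ioo_mem_nhdsGT (div_pos hε hC), Ioo_mem_nhdsGT (div_pos hε hD)]
    with r ⟨hr, hrρ⟩ ⟨_, hrC⟩ ⟨_, hrD⟩
  rw [lt_div_iff₀ hC] at hrC
  rw [lt_div_iff₀ hD] at hrD
  have smul_mem {x : E} (hx : x ∈ closedBall (0 : E) 1) : r • x ∈ closedBall (0 : E) r := by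
    rw [mem_closedBall_zero_iff] at hx ⊢
    rw [norm_smul, Real.norm_of_nonneg hr.le]
    exact mul_le_of_le_one_right hr.le hx
  have near {z : E} (hz : z ∈ closedBall (0 : E) r) := hball z (closedBall_subset_ball hrρ hz)
  have norm_pow_le {z : E} (hz : z ∈ closedBall (0 : E) r) (k : ℕ) : ‖‖z‖ ^ k‖ ≤ r ^ k := by
    rw [norm_pow, norm_norm]
    exact pow_le_pow_left₀ (norm_nonneg z) (mem_closedBall_zero_iff.1 hz) k
  constructor
  · intro x hx
    rw [norm_smul, norm_inv, norm_pow, Real.norm_of_nonneg hr.le, inv_mul_le_iff₀ (by positivity)]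
    calc ‖g (r • x)‖ ≤ C * r ^ (d + 1) :=
          (near (smul_mem hx)).1.trans (by gcongr; exact norm_pow_le (smul_mem hx) _)
      _ = r ^ d * (r * C) := by ring
      _ ≤ r ^ d * ε := by gcongr
  · intro x hx y hy
    have mean_value : ‖g (r • x) - g (r • y)‖ ≤ D * r ^ d * ‖r • x - r • y‖ :=
      (convex_closedBall (0 : E) r).norm_image_sub_le_of_norm_fderiv_le (𝕜 := ℝ)
        (fun z hz => (near hz).2.2.differentiableAt)
        (fun z hz => (near hz).2.1.trans (by gcongr; exact norm_pow_le hz d))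
        (smul_mem hy) (smul_mem hx)
    rw [← smul_sub, norm_smul, norm_inv, norm_pow, Real.norm_of_nonneg hr.le,
      inv_mul_le_iff₀ (by positivity)]
    calc ‖g (r • x) - g (r • y)‖ ≤ D * r ^ d * (r * ‖x - y‖) := by
          rwa [← smul_sub, norm_smul, Real.norm_of_nonneg hr.le] at mean_value
      _ = r ^ d * (r * D * ‖x - y‖) := by ring
      _ ≤ r ^ d * (ε * ‖x - y‖) := by gcongr

section RadialExtension

open NormedSpace

variable {E F : Type*} [NormedAddCommGroup E] [NormedSpace ℝ E]
  [NormedAddCommGroup F] [NormedSpace ℝ F]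

/-- The positively homogeneous extension of degree one to the whole space of a map given on the
unit sphere. -/
noncomputable def radialExtension (Ψ : E → F) (x : E) : F :=
  ‖x‖ • Ψ (normalize x)

theorem radialExtension_of_norm_eq_one (Ψ : E → F) {x : E} (hx : ‖x‖ = 1) :
    radialExtension Ψ x = Ψ x := by
  rw [radialExtension, normalize_eq_self_of_norm_eq_one hx, hx, one_smul]

theorem radialExtension_sub_id (Ψ : E → E) :
    radialExtension (fun x => Ψ x - x) = fun x => radialExtension Ψ x - x := by
  funext x
  rw [radialExtension, radialExtension, smul_sub, norm_smul_normalize]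

theorem norm_radialExtension {Ψ : E → F} (hΨ : ∀ x, ‖x‖ = 1 → ‖Ψ x‖ = 1) (x : E) :
    ‖radialExtension Ψ x‖ = ‖x‖ := by
  rcases eq_or_ne x 0 with rfl | hx
  · simp [radialExtension]
  · rw [radialExtension, norm_smul, norm_norm, hΨ _ (norm_normalize hx), mul_one]

theorem norm_mul_norm_normalize_sub_normalize_le (x y : E) :
    ‖y‖ * ‖normalize x - normalize y‖ ≤ 2 * ‖x - y‖ := by
  rcases eq_or_ne x 0 with rfl | hx
  · rw [normalize_zero_eq_zero, zero_sub, zero_sub, norm_neg, norm_neg,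
      ← norm_norm, ← norm_smul, norm_norm, norm_smul_normalize]
    linarith [norm_nonneg y]
  · have decomposition :
        ‖y‖ • (normalize x - normalize y) = (x - y) - (‖x‖ - ‖y‖) • normalize x := by
      rw [sub_smul, smul_sub, norm_smul_normalize, norm_smul_normalize]
      abel
    calc ‖y‖ * ‖normalize x - normalize y‖ = ‖(x - y) - (‖x‖ - ‖y‖) • normalize x‖ := by
          rw [← decomposition, norm_smul, norm_norm]
      _ ≤ ‖x - y‖ + |‖x‖ - ‖y‖| := by
          refine (norm_sub_le _ _).trans_eq ?_
          rw [norm_smul, norm_normalize hx, mul_one, Real.norm_eq_abs]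
      _ ≤ 2 * ‖x - y‖ := by linarith [abs_norm_sub_norm_le x y]

theorem norm_radialExtension_sub_le {ε : ℝ} {D : E → F}
    (hD : IsLipschitzSmallOn ε D (sphere 0 1)) (x y : E) :
    ‖radialExtension D x - radialExtension D y‖ ≤ 3 * ε * ‖x - y‖ := by
  have normalize_mem {z : E} (hz : z ≠ 0) : normalize z ∈ sphere (0 : E) 1 :=
    mem_sphere_zero_iff_norm.2 (norm_normalize hz)
  have norm_le (z : E) : ‖radialExtension D z‖ ≤ 3 * ε * ‖z‖ := by
    rcases eq_or_ne z 0 with rfl | hz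
    · simp [radialExtension]
    · have hDz := hD.norm_le _ (normalize_mem hz)
      rw [radialExtension, norm_smul, norm_norm, mul_comm]
      gcongr
      linarith [norm_nonneg (D (normalize z))]
  rcases eq_or_ne x 0 with rfl | hx
  · simpa [radialExtension] using norm_le y
  rcases eq_or_ne y 0 with rfl | hy
  · simpa [radialExtension] using norm_le x
  have hε : 0 ≤ ε := (norm_nonneg _).trans (hD.norm_le _ (normalize_mem hx))
  calc ‖radialExtension D x - radialExtension D y‖
      = ‖(‖x‖ - ‖y‖) • D (normalize x) + ‖y‖ • (D (normalize x) - D (normalize y))‖ := by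
        rw [radialExtension, radialExtension]
        congr 1
        module
    _ ≤ |‖x‖ - ‖y‖| * ‖D (normalize x)‖ + ‖y‖ * ‖D (normalize x) - D (normalize y)‖ := by
        refine (norm_add_le _ _).trans_eq ?_
        rw [norm_smul, norm_smul, norm_norm, Real.norm_eq_abs]
    _ ≤ ‖x - y‖ * ε + ‖y‖ * (ε * ‖normalize x - normalize y‖) := by
        gcongr
        · exact abs_norm_sub_norm_le x y
        · exact hD.norm_le _ (normalize_mem hx)
        · exact hD.norm_sub_le _ (normalize_mem hx) _ (normalize_mem hy)
    _ ≤ 3 * ε * ‖x - y‖ := by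
        linarith [mul_le_mul_of_nonneg_left (norm_mul_norm_normalize_sub_normalize_le x y) hε]

theorem exists_homeomorph_of_norm_sub_id_le [CompleteSpace E] {T : E → E} {c : ℝ} (hc : c < 1)
    (hT : ∀ x y, ‖(T x - x) - (T y - y)‖ ≤ c * ‖x - y‖) : ∃ e : E ≃ₜ E, ⇑e = T := by
  have approx : ApproximatesLinearOn T ((ContinuousLinearEquiv.refl ℝ E : E ≃L[ℝ] E) : E →L[ℝ] E)
      univ c.toNNReal := by
    intro x _ y _
    calc ‖T x - T y - (x - y)‖ = ‖(T x - x) - (T y - y)‖ := by congr 1; abel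
      _ ≤ c.toNNReal * ‖x - y‖ := (hT x y).trans (by gcongr; exact c.le_coe_toNNReal)
  have small : Subsingleton E ∨
      c.toNNReal < ‖((ContinuousLinearEquiv.refl ℝ E).symm : E →L[ℝ] E)‖₊⁻¹ := by
    refine (subsingleton_or_nontrivial E).imp_right fun (_ : Nontrivial E) => ?_
    change c.toNNReal < ‖ContinuousLinearMap.id ℝ E‖₊⁻¹
    rwa [ContinuousLinearMap.nnnorm_id, inv_one, Real.toNNReal_lt_one]
  exact ⟨approx.toHomeomorph T small, rfl⟩

theorem exists_homeomorph_eqOn_sphere [CompleteSpace E] {Ψ : E → E}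
    (hΨ : ∀ x, ‖x‖ = 1 → ‖Ψ x‖ = 1) {ε : ℝ} (hε : 3 * ε < 1)
    (hsmall : IsLipschitzSmallOn ε (fun x => Ψ x - x) (sphere 0 1)) :
    ∃ e : E ≃ₜ E, (∀ x, ‖e x‖ = ‖x‖) ∧ EqOn e Ψ (sphere 0 1) := by
  obtain ⟨e, he⟩ := exists_homeomorph_of_norm_sub_id_le (T := radialExtension Ψ) hε fun x y => by
    simpa only [radialExtension_sub_id] using norm_radialExtension_sub_le hsmall x y
  refine ⟨e, fun x => ?_, fun x hx => ?_⟩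
  · rw [he, norm_radialExtension hΨ]
  · rw [he, radialExtension_of_norm_eq_one Ψ (mem_sphere_zero_iff_norm.1 hx)]

end RadialExtension

section ParametrizedMaps

variable {E F : Type*} [NormedAddCommGroup E] [NormedSpace ℝ E] [FiniteDimensional ℝ E]
  [NormedAddCommGroup F] [NormedSpace ℝ F] {G : E × ℝ → F} {s : Set E}

theorem eventually_norm_sub_le_of_apply_zero_eq_zero (hG : ContDiff ℝ 1 G)
    (hG0 : ∀ x, G (x, 0) = 0) (hs : Bornology.IsBounded s) {ε : ℝ} (hε : 0 < ε) :
    ∀ᶠ t in 𝓝 (0 : ℝ), ∀ x ∈ s, ∀ y ∈ s, ‖G (x, t) - G (y, t)‖ ≤ ε * ‖x - y‖ := by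
  have := FiniteDimensional.proper ℝ E
  obtain ⟨R, hR⟩ := hs.subset_closedBall 0
  have fderiv_continuous : Continuous fun z : ℝ × E => fderiv ℝ (fun x => G (x, z.1)) z.2 :=
    Continuous.fderiv_one (f := fun (z : ℝ × E) x => G (x, z.1)) (by fun_prop) continuous_snd
  have fderiv_small : ∀ᶠ t in 𝓝 (0 : ℝ), ∀ x ∈ closedBall (0 : E) R,
      ‖fderiv ℝ (fun x => G (x, t)) x‖ < ε :=
    (isCompact_closedBall 0 R).eventually_forall_of_forall_eventually fun x _ =>
      fderiv_continuous.norm.continuousAt.eventually_lt_const (by simpa [hG0] using hε)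
  filter_upwards [fderiv_small] with t ht x hx y hy
  exact (convex_closedBall (0 : E) R).norm_image_sub_le_of_norm_fderiv_le (𝕜 := ℝ)
    (f := fun x => G (x, t))
    (fun z _ => (hG.comp (contDiff_prodMk_left t)).differentiable one_ne_zero z)
    (fun z hz => (ht z hz).le) (hR hy) (hR hx)

theorem exists_isLipschitzSmallOn_comp (hG : ContDiff ℝ 1 G) (hG0 : ∀ x, G (x, 0) = 0)
    (hs : Bornology.IsBounded s) {ε : ℝ} (hε : 0 < ε) :
    ∃ δ > 0, ∀ σ : E → ℝ, IsLipschitzSmallOn δ σ s →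
      IsLipschitzSmallOn ε (fun x => G (x, σ x)) s := by
  have := FiniteDimensional.proper ℝ E
  obtain ⟨R, hR⟩ := hs.subset_closedBall 0
  obtain ⟨M, hM⟩ := hG.contDiffOn.exists_lipschitzOnWith one_ne_zero
    ((convex_closedBall (0 : E) R).prod (convex_Icc (-1 : ℝ) 1))
    ((isCompact_closedBall (0 : E) R).prod isCompact_Icc)
  have lipschitz_snd {x : E} (hx : x ∈ s) {t t' : ℝ} (ht : |t| ≤ 1) (ht' : |t'| ≤ 1) :
      ‖G (x, t) - G (x, t')‖ ≤ M * |t - t'| := by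
    simpa [dist_eq_norm, Prod.dist_eq] using
      hM.dist_le_mul (x, t) ⟨hR hx, abs_le.1 ht⟩ (x, t') ⟨hR hx, abs_le.1 ht'⟩
  obtain ⟨τ, hτ, lipschitz_fst⟩ := eventually_nhds_iff_ball.1
    (eventually_norm_sub_le_of_apply_zero_eq_zero hG hG0 hs (half_pos hε))
  obtain ⟨δ, hδ, hδ1, hδτ, hδM⟩ : ∃ δ > 0, δ ≤ 1 ∧ δ < τ ∧ M * δ ≤ ε / 2 := by
    refine ⟨min (min 1 (τ / 2)) (ε / (2 * (M + 1))), by positivity, by simp, ?_, ?_⟩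
    · exact ((min_le_left _ _).trans (min_le_right _ _)).trans_lt (half_lt_self hτ)
    · calc M * min (min 1 (τ / 2)) (ε / (2 * (M + 1)))
          ≤ (M + 1) * (ε / (2 * (M + 1))) := by gcongr <;> simp
        _ = ε / 2 := by field_simp
  refine ⟨δ, hδ, fun σ hσ => ⟨fun x hx => ?_, fun x hx y hy => ?_⟩⟩
  · have hσx := hσ.norm_le x hx
    calc ‖G (x, σ x)‖ ≤ M * |σ x| := by
          simpa [hG0] using lipschitz_snd hx (hσx.trans hδ1) (t' := 0) (by simp)
      _ ≤ M * δ := by gcongr; exact hσx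
      _ ≤ ε := by linarith
  · have hσy := hσ.norm_le y hy
    calc ‖G (x, σ x) - G (y, σ y)‖
        ≤ ‖G (x, σ x) - G (x, σ y)‖ + ‖G (x, σ y) - G (y, σ y)‖ :=
          norm_sub_le_norm_sub_add_norm_sub ..
      _ ≤ M * (δ * ‖x - y‖) + ε / 2 * ‖x - y‖ := by
          gcongr
          · refine (lipschitz_snd hx ((hσ.norm_le x hx).trans hδ1) (hσy.trans hδ1)).trans ?_
            gcongr
            exact hσ.norm_sub_le x hx y hy
          · exact lipschitz_fst _ (mem_ball_zero_iff.2 (hσy.trans_lt hδτ)) x hx y hy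
      _ = (M * δ + ε / 2) * ‖x - y‖ := by ring
      _ ≤ ε * ‖x - y‖ := by gcongr; linarith

end ParametrizedMaps

section ExpandingFunctions

variable {φ : ℝ → ℝ} {c : ℝ} {I : Set ℝ}

theorem mul_abs_sub_le_abs_sub (hφ : MonotoneOn (fun t => φ t - c * t) I) {s t : ℝ} (hs : s ∈ I)
    (ht : t ∈ I) : c * |t - s| ≤ |φ t - φ s| := by
  wlog hst : s ≤ t generalizing s t
  · simpa only [abs_sub_comm] using this ht hs (le_of_not_ge hst)
  have := hφ hs ht hst
  rw [abs_of_nonneg (sub_nonneg.2 hst)]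
  exact le_trans (by linarith) (le_abs_self _)

theorem mul_abs_sub_le_of_eq_add {ψ : ℝ → ℝ} (hφ : MonotoneOn (fun t => φ t - c * t) I)
    {s t v w : ℝ} (hs : s ∈ I) (ht : t ∈ I) (hφs : φ s = φ 0 + v) (hψt : ψ t = ψ 0 + w) :
    c * |s - t| ≤ |v - w| + |(φ t - φ 0) - (ψ t - ψ 0)| :=
  calc c * |s - t| ≤ |φ s - φ t| := mul_abs_sub_le_abs_sub hφ ht hs
    _ = |(v - w) - ((φ t - φ 0) - (ψ t - ψ 0))| := by
        rw [hφs, hψt]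
        ring_nf
    _ ≤ |v - w| + |(φ t - φ 0) - (ψ t - ψ 0)| := abs_sub _ _

theorem exists_mem_Icc_eq_add {τ w : ℝ} (hφ : MonotoneOn (fun t => φ t - c * t) (Icc (-τ) τ))
    (hcont : ContinuousOn φ (Icc (-τ) τ)) (hτ : 0 ≤ τ) (hw : |w| ≤ c * τ) :
    ∃ t ∈ Icc (-τ) τ, c * |t| ≤ |w| ∧ φ t = φ 0 + w := by
  have zero_mem : (0 : ℝ) ∈ Icc (-τ) τ := ⟨neg_nonpos.2 hτ, hτ⟩
  have lower := hφ (left_mem_Icc.2 (neg_le_self hτ)) zero_mem zero_mem.1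
  have upper := hφ zero_mem (right_mem_Icc.2 (neg_le_self hτ)) hτ
  obtain ⟨hw₁, hw₂⟩ := abs_le.1 hw
  obtain ⟨t, ht, hφt⟩ : φ 0 + w ∈ φ '' Icc (-τ) τ :=
    intermediate_value_Icc (neg_le_self hτ) hcont ⟨by linarith, by linarith⟩
  refine ⟨t, ht, ?_, hφt⟩
  simpa [hφt] using mul_abs_sub_le_abs_sub hφ zero_mem ht

theorem exists_forall_apply_eq_add {X : Type*} {F : X → ℝ → ℝ} {s K : Set X} {w : X → ℝ} {τ : ℝ}
    (hmono : ∀ x ∈ K, MonotoneOn (fun t => F x t - c * t) (Icc (-τ) τ))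
    (hcont : ∀ x ∈ K, ContinuousOn (F x) (Icc (-τ) τ)) (hτ : 0 ≤ τ)
    (hw : ∀ x ∈ s, |w x| ≤ c * τ) (hwK : ∀ x ∈ s \ K, w x = 0) :
    ∃ σ : X → ℝ, ∀ x ∈ s, σ x ∈ Icc (-τ) τ ∧ c * |σ x| ≤ |w x| ∧ F x (σ x) = F x 0 + w x := by
  suffices solvable : ∀ x ∈ s, ∃ t ∈ Icc (-τ) τ, c * |t| ≤ |w x| ∧ F x t = F x 0 + w x by
    choose! σ hσ using solvable
    exact ⟨σ, hσ⟩
  intro x hx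
  by_cases hxK : x ∈ K
  · exact exists_mem_Icc_eq_add (hmono x hxK) (hcont x hxK) hτ (hw x hx)
  · exact ⟨0, by simp [hτ], by simp, by simp [hwK x ⟨hx, hxK⟩]⟩

end ExpandingFunctions

theorem exists_isLipschitzSmallOn_implicit {E : Type*} [NormedAddCommGroup E] [NormedSpace ℝ E]
    [FiniteDimensional ℝ E] {F : E × ℝ → ℝ} (hF : ContDiff ℝ 1 F) {s K : Set E}
    (hs : Bornology.IsBounded s) {c : ℝ} (hc : 0 < c)
    (hmono : ∀ x ∈ K, MonotoneOn (fun t => F (x, t) - c * t) (Icc (-c) c)) {ε : ℝ} (hε : 0 < ε) :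
    ∃ η > 0, ∀ w : E → ℝ, IsLipschitzSmallOn η w s → (∀ x ∈ s \ K, w x = 0) →
      ∃ σ : E → ℝ, IsLipschitzSmallOn ε σ s ∧ ∀ x ∈ s, F (x, σ x) = F (x, 0) + w x := by
  obtain ⟨τ₁, hτ₁, lipschitz_fst⟩ := eventually_nhds_iff_ball.1
    (eventually_norm_sub_le_of_apply_zero_eq_zero (G := fun z => F z - F (z.1, 0)) (by fun_prop)
      (fun x => sub_self _) hs (half_pos (mul_pos hc hε)))
  obtain ⟨τ, hτ, hτc, hττ₁⟩ : ∃ τ > 0, τ ≤ c ∧ τ < τ₁ :=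
    ⟨min c (τ₁ / 2), by positivity, min_le_left _ _, (min_le_right _ _).trans_lt (half_lt_self hτ₁)⟩
  replace hmono (x) (hx : x ∈ K) : MonotoneOn (fun t => F (x, t) - c * t) (Icc (-τ) τ) :=
    (hmono x hx).mono (Icc_subset_Icc (neg_le_neg hτc) hτc)
  refine ⟨min (c * τ) (c * ε / 2), by positivity, fun w hw hwK => ?_⟩
  obtain ⟨σ, hσ⟩ := exists_forall_apply_eq_add (F := fun x t => F (x, t)) hmono
    (fun x _ => (hF.continuous.comp (by fun_prop)).continuousOn) hτ.le
    (fun x hx => (hw.norm_le x hx).trans (min_le_left _ _)) hwK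
  choose! hσmem hσle hFσ using hσ
  have lipschitz_of_mem {x y} (hx : x ∈ s) (hy : y ∈ s) (hxK : x ∈ K) :
      c * |σ x - σ y| ≤ c * (ε * ‖x - y‖) :=
    calc c * |σ x - σ y| ≤ |w x - w y| + |(F (x, σ y) - F (x, 0)) - (F (y, σ y) - F (y, 0))| :=
          mul_abs_sub_le_of_eq_add (φ := fun t => F (x, t)) (ψ := fun t => F (y, t))
            (hmono x hxK) (hσmem x hx) (hσmem y hy) (hFσ x hx) (hFσ y hy)
      _ ≤ c * ε / 2 * ‖x - y‖ + c * ε / 2 * ‖x - y‖ := by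
          gcongr
          · exact (hw.norm_sub_le x hx y hy).trans (by gcongr; exact min_le_right _ _)
          · exact lipschitz_fst _ (mem_ball_zero_iff.2 ((abs_le.2 (hσmem y hy)).trans_lt hττ₁))
              x hx y hy
      _ = c * (ε * ‖x - y‖) := by ring
  have eq_zero_of_notMem {x} (hx : x ∈ s) (hxK : x ∉ K) : σ x = 0 := by
    have := hσle x hx
    rw [hwK x ⟨hx, hxK⟩, abs_zero] at this
    exact abs_nonpos_iff.1 (nonpos_of_mul_nonpos_right this hc)
  refine ⟨σ, ⟨fun x hx => ?_, fun x hx y hy => ?_⟩, hFσ⟩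
  · refine le_of_mul_le_mul_left ((hσle x hx).trans ((hw.norm_le x hx).trans ?_)) hc
    exact (min_le_right _ _).trans (by linarith [mul_pos hc hε])
  · by_cases hxK : x ∈ K
    · exact le_of_mul_le_mul_left (lipschitz_of_mem hx hy hxK) hc
    by_cases hyK : y ∈ K
    · rw [norm_sub_rev, norm_sub_rev x]
      exact le_of_mul_le_mul_left (lipschitz_of_mem hy hx hyK) hc
    · rw [eq_zero_of_notMem hx hxK, eq_zero_of_notMem hy hyK, sub_zero, norm_zero]
      positivity

theorem exists_pos_forall_le_imp_lt {X : Type*} [TopologicalSpace X] {C : Set X} (hC : IsCompact C)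
    {m g : X → ℝ} (hm : ContinuousOn m C) (hg : ContinuousOn g C)
    (h : ∀ z ∈ C, m z ≤ 0 → 0 < g z) : ∃ ρ > 0, ∀ z ∈ C, m z ≤ ρ → ρ < g z := by
  rcases C.eq_empty_or_nonempty with rfl | hne
  · exact ⟨1, one_pos, by simp⟩
  obtain ⟨z₀, hz₀, hmin⟩ := hC.exists_isMinOn hne (hm.sup hg)
  have hpos : 0 < max (m z₀) (g z₀) :=
    lt_max_iff.2 ((lt_or_ge 0 (m z₀)).imp_right (h z₀ hz₀))
  refine ⟨max (m z₀) (g z₀) / 2, half_pos hpos, fun z hz hmz => ?_⟩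
  have max_le : max (m z₀) (g z₀) ≤ max (m z) (g z) := hmin hz
  have half_lt : max (m z₀) (g z₀) / 2 < max (m z) (g z) := (half_lt_self hpos).trans_le max_le
  exact (lt_max_iff.1 half_lt).resolve_left hmz.not_gt

section TimeDerivative

variable {E : Type*} [NormedAddCommGroup E] [NormedSpace ℝ E] {F : E × ℝ → ℝ}

theorem continuous_deriv_snd (hF : ContDiff ℝ 1 F) :
    Continuous fun z : E × ℝ => deriv (fun t => F (z.1, t)) z.2 :=
  (Continuous.fderiv_one (f := fun (z : E × ℝ) t => F (z.1, t)) (by fun_prop)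
    continuous_snd).clm_apply continuous_const

theorem exists_monotoneOn_sub_mul (hF : ContDiff ℝ 1 F) {S : Set E} (hS : IsCompact S) {m : E → ℝ}
    (hm : ContinuousOn m S) (hpos : ∀ x ∈ S, m x ≤ 0 → 0 < deriv (fun t => F (x, t)) 0) :
    ∃ c > 0, ∀ x ∈ S, m x ≤ c → MonotoneOn (fun t => F (x, t) - c * t) (Icc (-c) c) := by
  obtain ⟨ρ, hρ, lt_deriv⟩ := exists_pos_forall_le_imp_lt
    (hS.prod (isCompact_Icc (a := (-1 : ℝ)) (b := 1))) (m := fun z => max (m z.1) |z.2|)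
    ((hm.comp continuousOn_fst fun (z : E × ℝ) hz => hz.1).sup continuous_snd.abs.continuousOn)
    (continuous_deriv_snd hF).continuousOn (by
      rintro ⟨x, t⟩ ⟨hx, -⟩ hxt
      obtain rfl : t = 0 := abs_nonpos_iff.1 ((le_max_right _ _).trans hxt)
      exact hpos x hx ((le_max_left _ _).trans hxt))
  have hcρ : min ρ 1 ≤ ρ := min_le_left _ _
  refine ⟨min ρ 1, by positivity, fun x hx hmx => ?_⟩
  have differentiable : Differentiable ℝ fun t => F (x, t) :=
    (hF.comp (contDiff_prodMk_right x)).differentiable one_ne_zero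
  refine monotoneOn_of_deriv_nonneg (convex_Icc _ _)
    (differentiable.continuous.sub (by fun_prop)).continuousOn (by fun_prop) fun t ht => ?_
  replace ht : |t| ≤ min ρ 1 := abs_le.2 (interior_subset ht : t ∈ Icc _ _)
  have := lt_deriv (x, t) ⟨hx, abs_le.1 (ht.trans (min_le_right _ _))⟩
    (max_le (hmx.trans hcρ) (ht.trans hcρ))
  rw [deriv_fun_sub (differentiable t) (by fun_prop), deriv_const_mul_id']
  linarith

end TimeDerivative

section Cutoff

theorem add_le_iff_add_le_of_eq_near {z a u w δ : ℝ} (hu : |u| ≤ δ) (hw : |w| ≤ δ)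
    (h : |z - a| ≤ δ → u = w) : z + u ≤ a ↔ z + w ≤ a := by
  by_cases hz : |z - a| ≤ δ
  · rw [h hz]
  · rw [abs_le] at hu hw
    rcases lt_abs.1 (not_le.1 hz) with hz | hz <;> constructor <;> intro <;> linarith

theorem IsLipschitzSmallOn.mul_left {E : Type*} [SeminormedAddCommGroup E] {s : Set E}
    {χ u : E → ℝ} {L : NNReal} {η : ℝ} (hu : IsLipschitzSmallOn η u s) (hχ : ∀ x ∈ s, ‖χ x‖ ≤ 1)
    (hχL : LipschitzOnWith L χ s) :
    IsLipschitzSmallOn ((1 + L) * η) (fun x => χ x * u x) s := by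
  have norm_mul_le {x} (hx : x ∈ s) (v : ℝ) : ‖χ x * v‖ ≤ ‖v‖ :=
    (norm_mul_le _ _).trans (mul_le_of_le_one_left (norm_nonneg v) (hχ x hx))
  refine ⟨fun x hx => ?_, fun x hx y hy => ?_⟩
  · have hη : 0 ≤ η := (norm_nonneg _).trans (hu.norm_le x hx)
    calc ‖χ x * u x‖ ≤ η := (norm_mul_le hx _).trans (hu.norm_le x hx)
      _ ≤ (1 + L) * η := le_mul_of_one_le_left hη (by simp)
  · calc ‖χ x * u x - χ y * u y‖ = ‖χ x * (u x - u y) + (χ x - χ y) * u y‖ := by ring_nf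
      _ ≤ ‖χ x * (u x - u y)‖ + ‖χ x - χ y‖ * ‖u y‖ :=
          (norm_add_le _ _).trans_eq (by rw [norm_mul (χ x - χ y)])
      _ ≤ η * ‖x - y‖ + L * ‖x - y‖ * η := by
          gcongr
          · exact (norm_mul_le hx _).trans (hu.norm_sub_le x hx y hy)
          · exact hχL.norm_sub_le hx hy
          · exact hu.norm_le y hy
      _ = (1 + L) * η * ‖x - y‖ := by ring

theorem exists_isLipschitzSmallOn_localization {E : Type*} [SeminormedAddCommGroup E] {s : Set E}
    {ω : E → ℝ} {L : NNReal} (hω : LipschitzOnWith L ω s) (a : ℝ) {c η : ℝ} (hc : 0 < c)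
    (hη : 0 < η) :
    ∃ δ > 0, ∀ u : E → ℝ, IsLipschitzSmallOn δ u s →
      ∃ w : E → ℝ, IsLipschitzSmallOn η w s ∧ (∀ x, c ≤ |ω x - a| → w x = 0) ∧
        ∀ x ∈ s, ω x + w x ≤ a ↔ ω x + u x ≤ a := by
  have hc2 := half_pos hc
  let χ := thickenedIndicator hc2 (closedBall a (c / 2))
  let M : NNReal := (c / 2).toNNReal⁻¹ * L
  have hχL : LipschitzOnWith M (fun x => (χ (ω x) : ℝ)) s :=
    (lipschitzWith_thickenedIndicator hc2 _).comp_lipschitzOnWith hω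
  have hχ_le (x : E) : ‖(χ (ω x) : ℝ)‖ ≤ 1 := by
    rw [NNReal.norm_eq]
    exact thickenedIndicator_le_one hc2 _ (ω x)
  have hχ_zero (x : E) (hx : c ≤ |ω x - a|) : χ (ω x) = 0 := by
    refine thickenedIndicator_zero hc2 _ fun hmem => ?_
    rw [mem_thickening_iff] at hmem
    obtain ⟨z, hz, hzx⟩ := hmem
    rw [mem_closedBall, Real.dist_eq] at hz
    rw [Real.dist_eq] at hzx
    linarith [abs_sub_le (ω x) z a]
  have hχ_one (x : E) (hx : |ω x - a| ≤ c / 2) : χ (ω x) = 1 := thickenedIndicator_one hc2 _ hx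
  refine ⟨min (c / 2) (min η (c / 2) / (1 + M)), by positivity, fun u hu =>
    ⟨fun x => χ (ω x) * u x, ?_⟩⟩
  have hw : IsLipschitzSmallOn (min η (c / 2)) (fun x => χ (ω x) * u x) s := by
    refine (hu.mul_left (fun x _ => hχ_le x) hχL).mono subset_rfl ?_
    rw [← le_div_iff₀' (by positivity)]
    exact min_le_right _ _
  refine ⟨hw.mono subset_rfl (min_le_left _ _), fun x hx => by simp [hχ_zero x hx], fun x hx => ?_⟩
  exact add_le_iff_add_le_of_eq_near ((hw.norm_le x hx).trans (min_le_right _ _))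
    ((hu.norm_le x hx).trans (min_le_left _ _)) fun h => by simp [hχ_one x h]

end Cutoff

section SphericalGradient

variable {E : Type*} [NormedAddCommGroup E] [InnerProductSpace ℝ E] [CompleteSpace E] {ω : E → ℝ}

theorem contDiff_gradient {n : WithTop ℕ∞} (hω : ContDiff ℝ (n + 1) ω) :
    ContDiff ℝ n (gradient ω) :=
  (InnerProductSpace.toDual ℝ E).symm.contDiff.comp (hω.fderiv_right le_rfl)

/-- The component of `∇ω(x)` orthogonal to `x`, multiplied by `‖x‖ ^ 2` so that it is smooth on the
whole space. On the unit sphere it is the gradient of the restriction of `ω` to the sphere. -/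
noncomputable def sphericalGradient (ω : E → ℝ) (x : E) : E :=
  ‖x‖ ^ 2 • gradient ω x - inner ℝ x (gradient ω x) • x

theorem contDiff_sphericalGradient {n : WithTop ℕ∞} (hω : ContDiff ℝ (n + 1) ω) :
    ContDiff ℝ n (sphericalGradient ω) := by
  have hgrad := contDiff_gradient hω
  exact ((contDiff_norm_sq ℝ).smul hgrad).sub ((contDiff_id.inner ℝ hgrad).smul contDiff_id)

theorem inner_sphericalGradient (ω : E → ℝ) (x : E) : inner ℝ x (sphericalGradient ω x) = 0 := by
  rw [sphericalGradient, inner_sub_right, real_inner_smul_right, real_inner_smul_right,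
    real_inner_self_eq_norm_sq, mul_comm, sub_self]

theorem fderiv_apply_sphericalGradient (ω : E → ℝ) {p : E} (hp : ‖p‖ = 1) :
    fderiv ℝ ω p (sphericalGradient ω p) = ‖sphericalGradient ω p‖ ^ 2 := by
  have gradient_eq : gradient ω p = sphericalGradient ω p + inner ℝ p (gradient ω p) • p := by
    rw [sphericalGradient, hp, one_pow, one_smul, sub_add_cancel]
  rw [← inner_gradient_left, gradient_eq, inner_add_left, real_inner_smul_left,
    inner_sphericalGradient, mul_zero, add_zero, real_inner_self_eq_norm_sq]

theorem fderiv_apply_sphericalGradient_pos {p : E} (hp : ‖p‖ = 1)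
    (hreg : ¬ ∃ c : ℝ, gradient ω p = c • p) : 0 < fderiv ℝ ω p (sphericalGradient ω p) := by
  rw [fderiv_apply_sphericalGradient ω hp, sq_pos_iff, norm_ne_zero_iff]
  intro h
  rw [sphericalGradient, hp, one_pow, one_smul, sub_eq_zero] at h
  exact hreg ⟨_, h⟩

end SphericalGradient

section SphereCurve

variable {E : Type*} [NormedAddCommGroup E] [InnerProductSpace ℝ E] {V : E → E}

/-- The point `x` moved for time `t` along the ray with velocity `V x` and, when `‖x‖ = 1` and
`V x` is tangent to the sphere at `x`, projected back to the unit sphere. The factor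
`√(1 + ‖t • V x‖ ^ 2)`, which then is the norm of `x + t • V x`, keeps the map smooth everywhere. -/
noncomputable def sphereCurve (V : E → E) (z : E × ℝ) : E :=
  (√(1 + ‖z.2 • V z.1‖ ^ 2))⁻¹ • (z.1 + z.2 • V z.1)

theorem sphereCurve_zero (V : E → E) (x : E) : sphereCurve V (x, 0) = x := by simp [sphereCurve]

theorem contDiff_sphereCurve {n : WithTop ℕ∞} (hV : ContDiff ℝ n V) :
    ContDiff ℝ n (sphereCurve V) := by
  have displacement : ContDiff ℝ n fun z : E × ℝ => z.2 • V z.1 :=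
    contDiff_snd.smul (hV.comp contDiff_fst)
  have radicand_pos (z : E × ℝ) : 0 < 1 + ‖z.2 • V z.1‖ ^ 2 := by positivity
  exact (((contDiff_const.add (displacement.norm_sq ℝ)).sqrt fun z => (radicand_pos z).ne').inv
    fun z => (Real.sqrt_pos.2 (radicand_pos z)).ne').smul (contDiff_fst.add displacement)

theorem norm_sphereCurve {x : E} (hx : ‖x‖ = 1) (hV : inner ℝ x (V x) = 0) (t : ℝ) :
    ‖sphereCurve V (x, t)‖ = 1 := by
  have norm_eq : ‖x + t • V x‖ = √(1 + ‖t • V x‖ ^ 2) := by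
    rw [norm_add_eq_sqrt_iff_real_inner_eq_zero.2 (by rw [real_inner_smul_right, hV, mul_zero]),
      hx, mul_one, sq]
  rw [sphereCurve, norm_smul, norm_eq, norm_inv, Real.norm_of_nonneg (Real.sqrt_nonneg _)]
  exact inv_mul_cancel₀ (by positivity)

theorem hasDerivAt_sphereCurve (V : E → E) (x : E) :
    HasDerivAt (fun t => sphereCurve V (x, t)) (V x) 0 := by
  have displacement : HasDerivAt (fun t : ℝ => t • V x) (V x) 0 := by
    simpa using (hasDerivAt_id (0 : ℝ)).smul_const (V x)
  have radicand : HasDerivAt (fun t : ℝ => 1 + ‖t • V x‖ ^ 2) 0 0 := by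
    simpa using displacement.norm_sq.const_add 1
  simpa using! ((radicand.sqrt (by simp)).inv (by simp)).smul (displacement.const_add x)

theorem deriv_comp_sphereCurve {ω : E → ℝ} {x : E} (hω : DifferentiableAt ℝ ω x) (V : E → E) :
    deriv (fun t => ω (sphereCurve V (x, t))) 0 = fderiv ℝ ω x (V x) := by
  rw [← sphereCurve_zero V x] at hω
  have := hω.hasFDerivAt.comp_hasDerivAt 0 (hasDerivAt_sphereCurve V x)
  rw [sphereCurve_zero] at this
  exact this.deriv

end SphereCurve

section SphereDeformation

variable {E : Type*} [NormedAddCommGroup E] [NormedSpace ℝ E] [FiniteDimensional ℝ E]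
  {ω : E → ℝ} {Q : E × ℝ → E} {a : ℝ}

theorem exists_homeomorph_apply_eq_add (hω : ContDiff ℝ 1 ω) (hQ : ContDiff ℝ 1 Q)
    (hQ0 : ∀ x, Q (x, 0) = x) (hQnorm : ∀ x t, ‖x‖ = 1 → ‖Q (x, t)‖ = 1)
    (htransverse : ∀ p, ‖p‖ = 1 → ω p = a → 0 < deriv (fun t => ω (Q (p, t))) 0) :
    ∃ c > 0, ∃ η > 0, ∀ w : E → ℝ, IsLipschitzSmallOn η w (sphere 0 1) →
      (∀ x, c ≤ |ω x - a| → w x = 0) →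
      ∃ e : E ≃ₜ E, (∀ x, ‖e x‖ = ‖x‖) ∧ ∀ x, ‖x‖ = 1 → ω (e x) = ω x + w x := by
  have := FiniteDimensional.proper ℝ E
  have hωQ : ContDiff ℝ 1 fun z => ω (Q z) := hω.comp hQ
  obtain ⟨c, hc, hmono⟩ := exists_monotoneOn_sub_mul hωQ (isCompact_sphere (0 : E) 1)
    (m := fun x => |ω x - a|) (hω.continuous.sub continuous_const).abs.continuousOn fun x hx hxa =>
      htransverse x (mem_sphere_zero_iff_norm.1 hx) (sub_eq_zero.1 (abs_nonpos_iff.1 hxa))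
  obtain ⟨δ, hδ, hcomp⟩ := exists_isLipschitzSmallOn_comp (G := fun z => Q z - z.1)
    (hQ.sub contDiff_fst) (fun x => by simp [hQ0]) (isBounded_sphere (x := (0 : E)) (r := 1))
    (ε := 1 / 6) (by norm_num)
  obtain ⟨η, hη, himplicit⟩ := exists_isLipschitzSmallOn_implicit hωQ
    (isBounded_sphere (x := (0 : E)) (r := 1)) hc
    (K := {x ∈ sphere 0 1 | |ω x - a| ≤ c}) (fun x hx => hmono x hx.1 hx.2) hδ
  refine ⟨c, hc, η, hη, fun w hw hwc => ?_⟩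
  obtain ⟨σ, hσ, hωσ⟩ := himplicit w hw fun x hx =>
    hwc x (le_of_not_ge fun hxc => hx.2 ⟨hx.1, hxc⟩)
  obtain ⟨e, norm_e, he⟩ := exists_homeomorph_eqOn_sphere (Ψ := fun x => Q (x, σ x))
    (fun x hx => hQnorm x (σ x) hx) (by norm_num) (hcomp σ hσ)
  refine ⟨e, norm_e, fun x hx => ?_⟩
  rw [he (mem_sphere_zero_iff_norm.2 hx), hωσ x (mem_sphere_zero_iff_norm.2 hx), hQ0]

theorem exists_homeomorph_sublevel_add (hω : ContDiff ℝ 1 ω) (hQ : ContDiff ℝ 1 Q)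
    (hQ0 : ∀ x, Q (x, 0) = x) (hQnorm : ∀ x t, ‖x‖ = 1 → ‖Q (x, t)‖ = 1)
    (htransverse : ∀ p, ‖p‖ = 1 → ω p = a → 0 < deriv (fun t => ω (Q (p, t))) 0) :
    ∃ δ > 0, ∀ u : E → ℝ, IsLipschitzSmallOn δ u (sphere 0 1) →
      Nonempty ({x | ‖x‖ = 1 ∧ ω x + u x ≤ a} ≃ₜ {x | ‖x‖ = 1 ∧ ω x ≤ a}) := by
  have := FiniteDimensional.proper ℝ E
  obtain ⟨c, hc, η, hη, hperturb⟩ := exists_homeomorph_apply_eq_add hω hQ hQ0 hQnorm htransverse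
  obtain ⟨L, hL⟩ := hω.contDiffOn.exists_lipschitzOnWith one_ne_zero
    (convex_closedBall (0 : E) 1) (isCompact_closedBall 0 1)
  obtain ⟨δ, hδ, hlocalize⟩ :=
    exists_isLipschitzSmallOn_localization (hL.mono sphere_subset_closedBall) a hc hη
  refine ⟨δ, hδ, fun u hu => ?_⟩
  obtain ⟨w, hw, hwc, hwu⟩ := hlocalize u hu
  obtain ⟨e, norm_e, he⟩ := hperturb w hw hwc
  refine ⟨e.subtype fun x => ?_⟩
  change ‖x‖ = 1 ∧ ω x + u x ≤ a ↔ ‖e x‖ = 1 ∧ ω (e x) ≤ a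
  rw [norm_e]
  exact and_congr_right fun hx => by rw [he x hx, hwu x (mem_sphere_zero_iff_norm.2 hx)]

end SphereDeformation

theorem exists_homeomorph_sublevel_add_of_regular {E : Type*} [NormedAddCommGroup E]
    [InnerProductSpace ℝ E] [FiniteDimensional ℝ E] {ω : E → ℝ} (hω : ContDiff ℝ 2 ω) {a : ℝ}
    (hreg : ∀ p, ‖p‖ = 1 → ω p = a → ¬ ∃ c : ℝ, gradient ω p = c • p) :
    ∃ δ > 0, ∀ u : E → ℝ, IsLipschitzSmallOn δ u (sphere 0 1) →
      Nonempty ({x | ‖x‖ = 1 ∧ ω x + u x ≤ a} ≃ₜ {x | ‖x‖ = 1 ∧ ω x ≤ a}) := by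
  have hω₁ : ContDiff ℝ 1 ω := hω.of_le (by norm_num)
  refine exists_homeomorph_sublevel_add hω₁
    (contDiff_sphereCurve (contDiff_sphericalGradient (hω.of_le (by norm_num))))
    (sphereCurve_zero _) (fun x t hx => norm_sphereCurve hx (inner_sphericalGradient ω x) t)
    fun p hp hpa => ?_
  rw [deriv_comp_sphereCurve (hω₁.differentiable one_ne_zero p)]
  exact fderiv_apply_sphericalGradient_pos hp (hreg p hp hpa)

theorem statement3_general {E : Type*} [NormedAddCommGroup E] [InnerProductSpace ℝ E]
    [FiniteDimensional ℝ E] {d : ℕ} {f ω : E → ℝ} (hω : ContDiff ℝ 2 ω)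
    (hhom : ∀ r > 0, ∀ x, ω (r • x) = r ^ d * ω x) (hf : AnalyticAt ℝ (fun x => f x - ω x) 0)
    (hg : (fun x => f x - ω x) =O[𝓝 0] fun x => ‖x‖ ^ (d + 1)) {a : ℝ}
    (hreg : ∀ p, ‖p‖ = 1 → ω p = a → ¬ ∃ c : ℝ, gradient ω p = c • p) :
    ∃ r₀ > (0 : ℝ), ∀ r ∈ Ioo (0 : ℝ) r₀,
      Nonempty ({x | ‖x‖ = 1 ∧ f (r • x) ≤ a * r ^ d} ≃ₜ {x | ‖x‖ = 1 ∧ ω x ≤ a}) := by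
  obtain ⟨δ, hδ, hsublevel⟩ := exists_homeomorph_sublevel_add_of_regular hω hreg
  obtain ⟨r₀, hr₀, hsmall⟩ := mem_nhdsGT_iff_exists_Ioo_subset.1
    (eventually_isLipschitzSmallOn_rescale hf hg hδ)
  refine ⟨r₀, hr₀, fun r hr => ?_⟩
  obtain ⟨e⟩ := hsublevel _ ((hsmall hr).mono sphere_subset_closedBall le_rfl)
  refine ⟨((Homeomorph.refl E).subtype fun x => and_congr_right fun _ => ?_).trans e⟩
  have hrd : 0 < r ^ d := pow_pos hr.1 d
  have rescaled : ω x + (r ^ d)⁻¹ • (f (r • x) - ω (r • x)) = f (r • x) / r ^ d := by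
    rw [hhom r hr.1, smul_eq_mul]
    field_simp
    ring
  rw [Homeomorph.refl_apply, id_eq, rescaled, div_le_iff₀ hrd]

section Polynomials

variable {n d : ℕ}

theorem analyticOnNhd_eval_mvPolynomial (P : MvPolynomial (Fin n) ℝ) :
    AnalyticOnNhd ℝ (fun x : EuclideanSpace ℝ (Fin n) => MvPolynomial.eval (fun i => x i) P) univ :=
  AnalyticOnNhd.eval_continuousLinearMap' (𝕜 := ℝ) (B := ℝ)
    (fun i => (EuclideanSpace.proj i : EuclideanSpace ℝ (Fin n) →L[ℝ] ℝ)) P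

theorem eval_smul_of_isHomogeneous {R σ : Type*} [CommSemiring R] {P : MvPolynomial σ R}
    (hP : P.IsHomogeneous d) (r : R) (x : σ → R) :
    MvPolynomial.eval (r • x) P = r ^ d * MvPolynomial.eval x P := by
  rw [MvPolynomial.eval_eq, MvPolynomial.eval_eq, Finset.mul_sum]
  refine Finset.sum_congr rfl fun m hm => ?_
  simp only [Pi.smul_apply, smul_eq_mul, mul_pow, Finset.prod_mul_distrib,
    Finset.prod_pow_eq_pow_sum, ← hP.degree_eq_sum_deg_support hm]
  ring

end Polynomials

/-- For `f` analytic near the origin with `f 0 = 0`, initial form `ω` of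
degree `d`, and `a < 0` a regular value of `ω` restricted to the unit sphere (i.e. at every
`p` on the sphere with `ω p = a` the gradient `∇ω(p)` is not parallel to `p`), there is
`r₀ > 0` such that for every `r ∈ (0, r₀)` the sets `{x : ‖x‖ = 1, f (r•x) ≤ a r^d}` and
`{x : ‖x‖ = 1, ω x ≤ a}` are homeomorphic. -/
theorem statement3 (n d : ℕ) (f ω : EuclideanSpace ℝ (Fin n) → ℝ)
    (U : Set (EuclideanSpace ℝ (Fin n))) (hU : IsOpen U)
    (h0U : (0 : EuclideanSpace ℝ (Fin n)) ∈ U)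
    (hf : AnalyticOnNhd ℝ f U) (hf0 : f 0 = 0)
    (P : MvPolynomial (Fin n) ℝ) (hP0 : P ≠ 0) (hPhom : P.IsHomogeneous d)
    (hωP : ∀ x : EuclideanSpace ℝ (Fin n), ω x = MvPolynomial.eval (fun i => x i) P)
    (hg : (fun x : EuclideanSpace ℝ (Fin n) => f x - ω x) =O[nhds 0]
      fun x : EuclideanSpace ℝ (Fin n) => ‖x‖ ^ (d + 1))
    (a : ℝ) (ha : a < 0)
    (hreg : ∀ p : EuclideanSpace ℝ (Fin n), ‖p‖ = 1 → ω p = a →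
      ¬ ∃ c : ℝ, gradient ω p = c • p) :
    ∃ r₀ > (0 : ℝ), ∀ r ∈ Ioo (0 : ℝ) r₀,
      Nonempty
        (↥{x : EuclideanSpace ℝ (Fin n) | ‖x‖ = 1 ∧ f (r • x) ≤ a * r ^ d} ≃ₜ
         ↥{x : EuclideanSpace ℝ (Fin n) | ‖x‖ = 1 ∧ ω x ≤ a}) := by
  obtain rfl := funext hωP
  have hP := analyticOnNhd_eval_mvPolynomial P
  exact statement3_general hP.contDiff (fun r _ x => eval_smul_of_isHomogeneous hPhom r x)
    ((hf 0 h0U).sub (hP 0 (mem_univ 0))) hg hreg
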